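/- arXiv:math/0501343 — 2 statements merged into one kernel-verified Lean document; each statement's English description precedes it below -/
import Mathlib

section
/- Let X, Y, Y' be locally finite topological spaces, f : X → Y and u : Y' → Y continuous maps, and let X' := {(y', x, p) | y' ∈ Y', x ∈ X, p a path in Y from u(y') to f(x)}, topologized as a subspace of Y' × X × C([0,1],Y), with projections u' : X' → X, (y',x,p) ↦ x, and f' : X' → Y', (y',x,p) ↦ y'. Assume X' is locally finite and that u is proper, i.e. the induced map π₀(u) : π₀(Y') → π₀(Y) has finite fibers. Then π₀(u') : π₀(X') → π₀(X) has finite fibers, and for every α : π₀(X) → ℚ with finite support one has u^*(f_!(α)) = f'_!((u')^*(α)) as functions on π₀(Y'), where for a proper map v the pullback v^*(β) := β ∘ π₀(v). -/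
open scoped unitInterval

/-- The homotopy fiber of `f : X → Y` at `y : Y`: pairs `(x, p)` with `p` a path
from `f x` to `y`, topologized as a subspace of `X × C(I, Y)`. -/
abbrev HomotopyFiber {X Y : Type*} [TopologicalSpace X] [TopologicalSpace Y]
    (f : X → Y) (y : Y) : Type _ :=
  {p : X × C(I, Y) // p.2 0 = f p.1 ∧ p.2 1 = y}

/-- The projection `i : F_y(f) → X`, `(x, p) ↦ x`. -/
def fiberIncl {X Y : Type*} [TopologicalSpace X] [TopologicalSpace Y]
    (f : X → Y) (y : Y) : HomotopyFiber f y → X :=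
  fun p => p.1.1

/-- A space is locally finite if all its homotopy groups `π_n`, `n ≥ 1`, at all base
points are finite, and at each base point all but finitely many of them are trivial. -/
def IsLocallyFinite (X : Type*) [TopologicalSpace X] : Prop :=
  ∀ x : X, (∀ n : ℕ, 1 ≤ n → Finite (HomotopyGroup (Fin n) X x)) ∧
    ∃ N : ℕ, ∀ n : ℕ, N < n → Subsingleton (HomotopyGroup (Fin n) X x)

/-- `μ(X, x) = ∏_{n ≥ 1} |π_n(X, x)|^{(-1)^n}`. -/
noncomputable def mu (X : Type*) [TopologicalSpace X] (x : X) : ℚ :=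
  ∏ᶠ n : ℕ, (Nat.card (HomotopyGroup (Fin (n + 1)) X x) : ℚ) ^ ((-1 : ℤ) ^ (n + 1))

/-- The path component of a point, as an element of `π₀(X)`. -/
def toPi0 {X : Type*} [TopologicalSpace X] (x : X) : ZerothHomotopy X :=
  Quotient.mk (pathSetoid X) x

/-- The map `π₀(f) : π₀(X) → π₀(Y)` induced by a continuous map. -/
def pi0Map {X Y : Type*} [TopologicalSpace X] [TopologicalSpace Y] {f : X → Y}
    (hf : Continuous f) : ZerothHomotopy X → ZerothHomotopy Y :=
  Quot.map f (fun _ _ h => ⟨h.somePath.map hf⟩)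


/-- The pushforward `f_!(α)` of a finitely supported function `α : π₀(X) → ℚ` along a
map `f : X → Y`. -/
noncomputable def pushforward {X Y : Type*} [TopologicalSpace X] [TopologicalSpace Y]
    (f : X → Y) (α : ZerothHomotopy X → ℚ) : ZerothHomotopy Y → ℚ :=
  fun c => ∑ᶠ z : ZerothHomotopy (HomotopyFiber f c.out),
    α (toPi0 (fiberIncl f c.out z.out)) * mu (HomotopyFiber f c.out) z.out

/-- The homotopy pullback `X' = {(y', x, p) | p : path from u(y') to f(x)}`,
topologized as a subspace of `Y' × X × C(I, Y)`. -/
abbrev PullbackSpace {X Y Y' : Type*} [TopologicalSpace X] [TopologicalSpace Y]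
    [TopologicalSpace Y'] (f : X → Y) (u : Y' → Y) : Type _ :=
  {q : Y' × X × C(I, Y) // q.2.2 0 = u q.1 ∧ q.2.2 1 = f q.2.1}

/-- The projection `u' : X' → X`. -/
def pbToX {X Y Y' : Type*} [TopologicalSpace X] [TopologicalSpace Y] [TopologicalSpace Y']
    (f : X → Y) (u : Y' → Y) : PullbackSpace f u → X :=
  fun q => q.1.2.1

/-- The projection `f' : X' → Y'`. -/
def pbToY' {X Y Y' : Type*} [TopologicalSpace X] [TopologicalSpace Y] [TopologicalSpace Y']
    (f : X → Y) (u : Y' → Y) : PullbackSpace f u → Y' :=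
  fun q => q.1.1

theorem continuous_pbToX {X Y Y' : Type*} [TopologicalSpace X] [TopologicalSpace Y]
    [TopologicalSpace Y'] (f : X → Y) (u : Y' → Y) : Continuous (pbToX f u) :=
  continuous_subtype_val.snd.fst

theorem continuous_pbToY' {X Y Y' : Type*} [TopologicalSpace X] [TopologicalSpace Y]
    [TopologicalSpace Y'] (f : X → Y) (u : Y' → Y) : Continuous (pbToY' f u) :=
  continuous_subtype_val.fst

/-!
The homotopy fiber of `f' : X' → Y'` at `y'` consists of `(b, x, p, w)` with `p` a path from `u b`
to `f x` and `w` a path from `b` to `y'`. Concatenating `p⁻¹` with `u ∘ w` identifies it, up to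
homotopy and over `X`, with the homotopy fiber of `f` at `u y'`. The pushforward at a path component
is a sum over the components of the homotopy fiber over any of its points, and such sums are
invariant under homotopy equivalence because `mu` is: homotopy groups are transported along paths,
so a map homotopic to the identity induces bijections even though it moves base points.

For properness, a component of `X'` over a component of `X` and one of `Y'` is determined by the
homotopy class of a path in `Y` between the images of chosen points of these. There are finitely
many such classes since the fundamental groups of `Y` are finite, and finitely many choices for the
component of `Y'` since `u` is proper.
-/

section CubeDilation

variable {N : Type*}

/-- The dilation of the cube about its centre by the factor `k`, clamped to the cube. -/
noncomputable def cubeDilation (k : ℝ) (s : N → I) : N → I :=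
  fun i => Set.projIcc 0 1 zero_le_one (1 / 2 + k * ((s i : ℝ) - 1 / 2))

theorem continuous_cubeDilation : Continuous fun q : ℝ × (N → I) => cubeDilation q.1 q.2 := by
  unfold cubeDilation
  fun_prop

@[simp]
theorem cubeDilation_one (s : N → I) : cubeDilation 1 s = s := by
  funext i
  simp [cubeDilation]

variable [Fintype N]

/-- The sup-norm distance to the centre of the cube, normalised to be `1` on the boundary. -/
noncomputable def cubeRadius (s : N → I) : ℝ := ‖fun i => 2 * (s i : ℝ) - 1‖

@[fun_prop]
theorem continuous_cubeRadius : Continuous (cubeRadius : (N → I) → ℝ) := by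
  unfold cubeRadius
  fun_prop

theorem cubeRadius_le_one (s : N → I) : cubeRadius s ≤ 1 := by
  refine (pi_norm_le_iff_of_nonneg zero_le_one).2 fun i => ?_
  rw [Real.norm_eq_abs, abs_le]
  constructor <;> linarith [(s i).2.1, (s i).2.2]

theorem cubeRadius_of_mem_boundary {s : N → I} (hs : s ∈ Cube.boundary N) : cubeRadius s = 1 := by
  obtain ⟨i, hi⟩ := hs
  refine (cubeRadius_le_one s).antisymm ?_
  calc (1 : ℝ) = ‖2 * (s i : ℝ) - 1‖ := by rcases hi with hi | hi <;> norm_num [hi]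
    _ ≤ cubeRadius s := norm_le_pi_norm (fun i => 2 * (s i : ℝ) - 1) i

theorem cubeDilation_mem_boundary {k : ℝ} (hk : 0 ≤ k) {s : N → I} (h : 1 ≤ k * cubeRadius s) :
    cubeDilation k s ∈ Cube.boundary N := by
  have hnorm : 1 ≤ ‖fun i => k * (2 * (s i : ℝ) - 1)‖ := by
    rw [cubeRadius, ← Real.norm_of_nonneg hk, ← norm_smul] at h
    exact h
  contrapose! hnorm
  refine (pi_norm_lt_iff one_pos).2 fun i => ?_
  contrapose! hnorm
  refine ⟨i, ?_⟩
  rcases le_abs.1 hnorm with hi | hi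
  · exact Or.inr (Set.projIcc_of_right_le _ (by linarith))
  · exact Or.inl (Set.projIcc_of_le_left _ (by linarith))

end CubeDilation

-- At time `r`, the map `Γ` is squeezed into the concentric cube of radius `1 / (1 + r)`, and the
-- remaining collar runs through the path `β`.
theorem exists_extension_of_boundary_path {N T X : Type*} [Finite N] [TopologicalSpace T]
    [TopologicalSpace X] (Γ : C(T × (N → I), X)) (β : C(T × I, X))
    (h : ∀ t, ∀ s ∈ Cube.boundary N, Γ (t, s) = β (t, 0)) :
    ∃ K : C(T × I × (N → I), X), (∀ t s, K (t, 0, s) = Γ (t, s)) ∧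
      ∀ t r, ∀ s ∈ Cube.boundary N, K (t, r, s) = β (t, r) := by
  have := Fintype.ofFinite N
  let K (q : T × I × (N → I)) : X :=
    if (1 + (q.2.1 : ℝ)) * cubeRadius q.2.2 ≤ 1 then Γ (q.1, cubeDilation (1 + (q.2.1 : ℝ)) q.2.2)
    else β (q.1, Set.projIcc 0 1 zero_le_one ((1 + (q.2.1 : ℝ)) * cubeRadius q.2.2 - 1))
  have hK : Continuous K := by
    refine Continuous.if_le ?_ (by fun_prop) (by fun_prop) (by fun_prop) fun q hq => ?_
    · have hdilation : Continuous fun q : T × I × (N → I) =>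
          cubeDilation (1 + (q.2.1 : ℝ)) q.2.2 :=
        continuous_cubeDilation.comp (f := fun q : T × I × (N → I) => (1 + (q.2.1 : ℝ), q.2.2))
          (by fun_prop)
      fun_prop
    · rw [h _ _ (cubeDilation_mem_boundary (by linarith [q.2.1.2.1]) hq.ge), hq]
      simp
  refine ⟨⟨K, hK⟩, fun t s => by simp [K, cubeRadius_le_one], fun t r s hs => ?_⟩
  rcases eq_or_ne r 0 with rfl | hr
  · simp [K, cubeRadius_le_one, h t s hs]
  · have hr' : (0 : ℝ) < r := unitInterval.pos_iff_ne_zero.2 hr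
    have : ¬ 1 + (r : ℝ) ≤ 1 := by linarith
    simp [K, cubeRadius_of_mem_boundary hs, this]

section FreeHomotopy

variable {N X : Type*} [TopologicalSpace X] {x y z : X}

/-- Two generalized loops are freely homotopic along the path `p` if some homotopy between them
carries the whole boundary of the cube along `p`. This is the relation inducing the transport of
homotopy groups along `p`. -/
def FreelyHomotopicAlong (p : Path x y) (γ : GenLoop N X x) (δ : GenLoop N X y) : Prop :=
  ∃ H : ContinuousMap.Homotopy γ.1 δ.1, ∀ t : I, ∀ s ∈ Cube.boundary N, H (t, s) = p t

namespace FreelyHomotopicAlong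

variable {p : Path x y} {γ γ' : GenLoop N X x} {δ δ' : GenLoop N X y}

theorem symm (h : FreelyHomotopicAlong p γ δ) : FreelyHomotopicAlong p.symm δ γ := by
  obtain ⟨H, hH⟩ := h
  exact ⟨H.symm, fun t s hs => by simp [ContinuousMap.Homotopy.symm_apply, hH _ s hs]⟩

theorem trans {q : Path y z} {ε : GenLoop N X z} (h : FreelyHomotopicAlong p γ δ)
    (h' : FreelyHomotopicAlong q δ ε) : FreelyHomotopicAlong (p.trans q) γ ε := by
  obtain ⟨H, hH⟩ := h
  obtain ⟨K, hK⟩ := h'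
  refine ⟨H.trans K, fun t s hs => ?_⟩
  rw [ContinuousMap.Homotopy.trans_apply, Path.trans_apply]
  split_ifs
  · exact hH _ s hs
  · exact hK _ s hs

theorem of_homotopic (h : GenLoop.Homotopic γ γ') : FreelyHomotopicAlong (Path.refl x) γ γ' := by
  obtain ⟨H⟩ := h
  exact ⟨H.toHomotopy, fun t s hs => (H.eq_fst t hs).trans (γ.2 s hs)⟩

theorem homotopic_of_refl (h : FreelyHomotopicAlong (Path.refl x) γ γ') :
    GenLoop.Homotopic γ γ' := by
  obtain ⟨H, hH⟩ := h
  exact ⟨⟨H, fun t s hs => (hH t s hs).trans (γ.2 s hs).symm⟩⟩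

variable [Finite N]

theorem exists_of_path (p : Path x y) (γ : GenLoop N X x) :
    ∃ δ : GenLoop N X y, FreelyHomotopicAlong p γ δ := by
  obtain ⟨K, hK0, hK⟩ := exists_extension_of_boundary_path (T := Unit)
    (γ.1.comp ContinuousMap.snd) (p.toContinuousMap.comp ContinuousMap.snd)
    fun _ s hs => (γ.2 s hs).trans p.source.symm
  exact ⟨⟨⟨fun s => K ((), 1, s), by fun_prop⟩, fun s hs => (hK () 1 s hs).trans p.target⟩,
    ⟨⟨⟨fun q => K ((), q), by fun_prop⟩, hK0 (), fun _ => rfl⟩, hK ()⟩⟩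

-- Extending the null-homotopy of `q` over the cube deforms the given free homotopy into one whose
-- boundary stays at `x`; its two ends are deformed rel boundary along the way.
theorem homotopic_of_nullhomotopic {q : Path x x} (hq : q.Homotopic (Path.refl x))
    (h : FreelyHomotopicAlong q γ γ') : GenLoop.Homotopic γ γ' := by
  obtain ⟨Q⟩ := hq
  obtain ⟨H, hH⟩ := h
  obtain ⟨K, hK0, hK⟩ := exists_extension_of_boundary_path H.toContinuousMap
    ⟨fun v : I × I => Q (v.2, v.1), by fun_prop⟩ fun t s hs => (hH t s hs).trans (by simp)
  let top (t : I) : GenLoop N X x :=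
    ⟨⟨fun s => K (t, 1, s), by fun_prop⟩, fun s hs => (hK t 1 s hs).trans (Q.apply_one t)⟩
  have hstart : GenLoop.Homotopic γ (top 0) :=
    homotopic_of_refl ⟨⟨⟨fun v => K (0, v), by fun_prop⟩,
      fun s => (hK0 0 s).trans (H.apply_zero s), fun _ => rfl⟩,
      fun r s hs => (hK 0 r s hs).trans (Q.source r)⟩
  have hend : GenLoop.Homotopic γ' (top 1) :=
    homotopic_of_refl ⟨⟨⟨fun v => K (1, v), by fun_prop⟩,
      fun s => (hK0 1 s).trans (H.apply_one s), fun _ => rfl⟩,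
      fun r s hs => (hK 1 r s hs).trans (Q.target r)⟩
  have htop : GenLoop.Homotopic (top 0) (top 1) :=
    homotopic_of_refl ⟨⟨⟨fun v => K (v.1, 1, v.2), by fun_prop⟩, fun _ => rfl, fun _ => rfl⟩,
      fun t s hs => (hK t 1 s hs).trans (Q.apply_one t)⟩
  exact (hstart.trans htop).trans hend.symm

theorem homotopic_congr (h : FreelyHomotopicAlong p γ δ) (h' : FreelyHomotopicAlong p γ' δ')
    (hγ : GenLoop.Homotopic γ γ') : GenLoop.Homotopic δ δ' := by
  refine homotopic_of_nullhomotopic ?_ ((h.symm.trans (of_homotopic hγ)).trans h')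
  have hrefl : (p.symm.trans (Path.refl x)).Homotopic p.symm := ⟨Path.Homotopy.transRefl _⟩
  exact (hrefl.hcomp (Path.Homotopic.refl p)).trans ⟨(Path.Homotopy.reflSymmTrans p).symm⟩

end FreelyHomotopicAlong

end FreeHomotopy

section Transport

variable {N : Type*} [Finite N] {X : Type*} [TopologicalSpace X] {x y : X}

/-- The transport of homotopy classes along a path, sending a generalized loop to any generalized
loop freely homotopic to it along the path. -/
noncomputable def homotopyGroupTransport (p : Path x y) :
    HomotopyGroup N X x → HomotopyGroup N X y :=
  Quotient.map (fun γ => (FreelyHomotopicAlong.exists_of_path p γ).choose) fun γ δ =>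
    (FreelyHomotopicAlong.exists_of_path p γ).choose_spec.homotopic_congr
      (FreelyHomotopicAlong.exists_of_path p δ).choose_spec

theorem FreelyHomotopicAlong.homotopyGroupTransport_mk {p : Path x y} {γ : GenLoop N X x}
    {δ : GenLoop N X y} (h : FreelyHomotopicAlong p γ δ) :
    homotopyGroupTransport p (Quotient.mk _ γ) = Quotient.mk _ δ :=
  Quotient.sound ((exists_of_path p γ).choose_spec.homotopic_congr h (GenLoop.Homotopic.refl γ))

theorem homotopyGroupTransport_symm_apply_apply (p : Path x y) (c : HomotopyGroup N X x) :
    homotopyGroupTransport p.symm (homotopyGroupTransport p c) = c := by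
  induction c using Quotient.inductionOn with
  | _ γ =>
    obtain ⟨δ, h⟩ := FreelyHomotopicAlong.exists_of_path p γ
    rw [h.homotopyGroupTransport_mk, h.symm.homotopyGroupTransport_mk]

theorem homotopyGroupTransport_bijective (p : Path x y) :
    Function.Bijective (homotopyGroupTransport (N := N) p) :=
  Function.bijective_iff_has_inverse.2 ⟨homotopyGroupTransport p.symm,
    homotopyGroupTransport_symm_apply_apply p, fun c => by
      simpa using homotopyGroupTransport_symm_apply_apply p.symm c⟩

end Transport

section HomotopyGroupMap

variable {N A B : Type*} [TopologicalSpace A] [TopologicalSpace B]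

/-- The map `π_N(A, a) → π_N(B, g a)` induced by a continuous map `g`. -/
def homotopyGroupMap (g : C(A, B)) (a : A) : HomotopyGroup N A a → HomotopyGroup N B (g a) :=
  Quotient.map (fun γ => ⟨g.comp γ.1, fun s hs => congrArg g (γ.2 s hs)⟩)
    fun _ _ h => ContinuousMap.HomotopicRel.comp_continuousMap h g

theorem homotopyGroupMap_comp {C : Type*} [TopologicalSpace C] (h : C(B, C)) (g : C(A, B)) (a : A) :
    homotopyGroupMap (N := N) (h.comp g) a = homotopyGroupMap h (g a) ∘ homotopyGroupMap g a := by
  funext c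
  induction c using Quotient.inductionOn
  rfl

theorem homotopyGroupMap_id (a : A) : homotopyGroupMap (N := N) (ContinuousMap.id A) a = id := by
  funext c
  induction c using Quotient.inductionOn
  rfl

variable [Finite N]

theorem homotopyGroupTransport_comp_homotopyGroupMap {g h : C(A, B)} (K : g.Homotopy h) (a : A) :
    homotopyGroupTransport (N := N) (K.evalAt a) ∘ homotopyGroupMap g a = homotopyGroupMap h a := by
  funext c
  induction c using Quotient.inductionOn with
  | _ γ =>
    have hγ : Continuous γ := γ.1.continuous
    refine FreelyHomotopicAlong.homotopyGroupTransport_mk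
      ⟨⟨⟨fun q => K (q.1, γ q.2), by fun_prop⟩, fun s => K.apply_zero _, fun s => K.apply_one _⟩,
        fun t s hs => ?_⟩
    exact congrArg (fun a => K (t, a)) (GenLoop.boundary γ s hs)

theorem homotopyGroupMap_bijective_of_homotopic_id {g : C(A, A)}
    (hg : g.Homotopic (ContinuousMap.id A)) (a : A) :
    Function.Bijective (homotopyGroupMap (N := N) g a) := by
  obtain ⟨K⟩ := hg
  refine (Function.Bijective.of_comp_iff' (homotopyGroupTransport_bijective (K.evalAt a)) _).1 ?_
  rw [homotopyGroupTransport_comp_homotopyGroupMap, homotopyGroupMap_id]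
  exact Function.bijective_id

theorem homotopyGroupMap_bijective (e : ContinuousMap.HomotopyEquiv A B) (a : A) :
    Function.Bijective (homotopyGroupMap (N := N) e.toFun a) := by
  have hleft := homotopyGroupMap_bijective_of_homotopic_id (N := N) e.left_inv a
  have hright := homotopyGroupMap_bijective_of_homotopic_id (N := N) e.right_inv (e.toFun a)
  rw [homotopyGroupMap_comp] at hleft hright
  exact (Function.Bijective.of_comp_iff' ⟨hright.injective.of_comp, hleft.surjective.of_comp⟩ _).1
    hleft

theorem mu_eq_of_joined {a b : A} (h : Joined a b) : mu A a = mu A b :=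
  finprod_congr fun n => by
    rw [Nat.card_eq_of_bijective _
      (homotopyGroupTransport_bijective (N := Fin (n + 1)) h.somePath)]

theorem mu_homotopyEquiv (e : ContinuousMap.HomotopyEquiv A B) (a : A) :
    mu B (e.toFun a) = mu A a :=
  finprod_congr fun n => by
    rw [Nat.card_eq_of_bijective _ (homotopyGroupMap_bijective (N := Fin (n + 1)) e a)]

end HomotopyGroupMap

section PathComponents

variable {A B : Type*} [TopologicalSpace A] [TopologicalSpace B]

theorem toPi0_eq_toPi0 {a b : A} : toPi0 a = toPi0 b ↔ Joined a b :=
  Quotient.eq (r := pathSetoid A)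

@[simp]
theorem toPi0_out (c : ZerothHomotopy A) : toPi0 c.out = c := Quotient.out_eq c

theorem toPi0_surjective : Function.Surjective (toPi0 : A → ZerothHomotopy A) := fun c =>
  ⟨c.out, toPi0_out c⟩

@[simp]
theorem pi0Map_toPi0 {g : A → B} (hg : Continuous g) (a : A) :
    pi0Map hg (toPi0 a) = toPi0 (g a) := rfl

theorem pi0Map_bijective (e : ContinuousMap.HomotopyEquiv A B) :
    Function.Bijective (pi0Map e.toFun.continuous) := by
  refine Function.bijective_iff_has_inverse.2 ⟨pi0Map e.invFun.continuous, ?_, ?_⟩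
  · rintro ⟨a⟩
    exact toPi0_eq_toPi0.2 (e.left_inv.map fun K => K.evalAt a)
  · rintro ⟨b⟩
    exact toPi0_eq_toPi0.2 (e.right_inv.map fun K => K.evalAt b)

/-- The sum of `β` over the path components of `A`, each weighted by its `mu`. Pushing forward is
summing over the homotopy fibers in this sense. -/
noncomputable def homotopySum (A : Type*) [TopologicalSpace A] (β : ZerothHomotopy A → ℚ) : ℚ :=
  ∑ᶠ c : ZerothHomotopy A, β c * mu A c.out

theorem homotopySum_comp_homotopyEquiv (e : ContinuousMap.HomotopyEquiv A B)
    (β : ZerothHomotopy B → ℚ) :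
    homotopySum A (β ∘ pi0Map e.toFun.continuous) = homotopySum B β := by
  refine finsum_eq_of_bijective _ (pi0Map_bijective e) fun c => ?_
  have hout : Joined (e.toFun c.out) (pi0Map e.toFun.continuous c).out := by
    rw [← toPi0_eq_toPi0, toPi0_out, ← pi0Map_toPi0 e.toFun.continuous, toPi0_out]
  rw [Function.comp_apply, ← mu_homotopyEquiv e, mu_eq_of_joined hout]

end PathComponents

section PathFamilies

variable {X : Type*} [TopologicalSpace X] {x y z x' y' z' : X}

theorem coe_symm_congr {p : Path x y} {p' : Path x' y'} (hp : ⇑p = p') :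
    ⇑p.symm = p'.symm :=
  congrArg (· ∘ unitInterval.symm) hp

theorem coe_trans_congr {p : Path x y} {q : Path y z} {p' : Path x' y'} {q' : Path y' z'}
    (hp : ⇑p = p') (hq : ⇑q = q') : ⇑(p.trans q) = p'.trans q' := by
  funext s
  rw [Path.trans_apply, Path.trans_apply, hp, hq]

/-- The part of a path before time `t`, traversed in unit time. -/
def initialSegment (p : Path x y) (t : I) : Path x (p t) :=
  (p.subpath 0 t).cast p.source.symm rfl

/-- The part of a path after time `t`, traversed in unit time. -/
def finalSegment (p : Path x y) (t : I) : Path (p t) y :=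
  (p.subpath t 1).cast rfl p.target.symm

/-- The path `p` followed by the part of `q` before time `t`, interpolating between `p` and
`p.trans q`. -/
noncomputable def partialTrans (p : Path x y) (q : Path y z) (t : I) : Path x (q t) where
  toFun s := (p.trans q).extend ((1 + t) / 2 * s)
  source' := by simp
  target' := by
    have ht : (1 + (t : ℝ)) / 2 ∈ I := ⟨by linarith [t.2.1], by linarith [t.2.2]⟩
    rw [Set.Icc.coe_one, mul_one, Path.extend_apply _ ht, Path.trans_apply]
    split_ifs with h
    · obtain rfl : t = 0 := le_antisymm (Subtype.coe_le_coe.1 (by push_cast; linarith)) t.2.1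
      simp
    · exact congrArg q (Subtype.ext (by ring))

theorem coe_initialSegment_zero (p : Path x y) : ⇑(initialSegment p 0) = Path.refl x := by
  funext s
  simp [initialSegment]

theorem coe_initialSegment_one (p : Path x y) : ⇑(initialSegment p 1) = p := by
  funext s
  simp [initialSegment]

theorem coe_finalSegment_zero (p : Path x y) : ⇑(finalSegment p 0) = p := by
  funext s
  simp [finalSegment]

theorem coe_finalSegment_one (p : Path x y) : ⇑(finalSegment p 1) = Path.refl y := by
  funext s
  simp [finalSegment]

theorem coe_partialTrans_zero (p : Path x y) (q : Path y z) : ⇑(partialTrans p q 0) = p := by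
  funext s
  have hs : (s : ℝ) / 2 ∈ I := ⟨by linarith [s.2.1], by linarith [s.2.2]⟩
  calc (p.trans q).extend ((1 + ((0 : I) : ℝ)) / 2 * s)
      = (p.trans q).extend (s / 2) := by
        congr 1
        norm_num
        ring
    _ = p ⟨2 * (s / 2), _⟩ := by
        rw [Path.extend_apply _ hs, Path.trans_apply, dif_pos (by linarith [s.2.2])]
    _ = p s := congrArg p (Subtype.ext (by ring))

theorem coe_partialTrans_one (p : Path x y) (q : Path y z) :
    ⇑(partialTrans p q 1) = p.trans q := by
  funext s
  have hs : (1 + ((1 : I) : ℝ)) / 2 * s = s := by norm_num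
  calc (p.trans q).extend ((1 + ((1 : I) : ℝ)) / 2 * s) = (p.trans q).extend s := by rw [hs]
    _ = (p.trans q) s := Path.extend_apply _ s.2

variable {Z : Type*} [TopologicalSpace Z] {a b : Z → X} {γ : ∀ z, Path (a z) (b z)} {τ : Z → I}

theorem continuous_initialSegment_family (hγ : Continuous ↿γ) (hτ : Continuous τ) :
    Continuous ↿fun z => initialSegment (γ z) (τ z) :=
  hγ.comp (f := fun q : Z × I => (q.1, Set.Icc.convexComb 0 (τ q.1) q.2))
    (by fun_prop)

theorem continuous_finalSegment_family (hγ : Continuous ↿γ) (hτ : Continuous τ) :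
    Continuous ↿fun z => finalSegment (γ z) (τ z) :=
  hγ.comp (f := fun q : Z × I => (q.1, Set.Icc.convexComb (τ q.1) 1 q.2))
    (by fun_prop)

theorem continuous_partialTrans_family {c : Z → X} {δ : ∀ z, Path (b z) (c z)}
    (hγ : Continuous ↿γ) (hδ : Continuous ↿δ) (hτ : Continuous τ) :
    Continuous ↿fun z => partialTrans (γ z) (δ z) (τ z) :=
  (Path.continuous_uncurry_extend_of_continuous_family _
    (Path.trans_continuous_family γ hγ δ hδ)).comp
    (f := fun q : Z × I => (q.1, (1 + (τ q.1 : ℝ)) / 2 * (q.2 : ℝ))) (by fun_prop)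

end PathFamilies

namespace HomotopyFiber

variable {X Y : Type*} [TopologicalSpace X] [TopologicalSpace Y] {f : X → Y} {y : Y}

/-- The path `p` of a point `(x, p)` of the homotopy fiber. -/
def path (z : HomotopyFiber f y) : Path (f (fiberIncl f y z)) y := ⟨z.1.2, z.2.1, z.2.2⟩

theorem ext {z z' : HomotopyFiber f y} (hpoint : fiberIncl f y z = fiberIncl f y z')
    (hpath : ⇑z.path = z'.path) : z = z' :=
  Subtype.ext (Prod.ext hpoint (DFunLike.coe_injective hpath))

theorem continuous_fiberIncl (f : X → Y) (y : Y) : Continuous (fiberIncl f y) :=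
  continuous_subtype_val.fst

theorem continuous_path_comp {Z : Type*} [TopologicalSpace Z] {g : Z → HomotopyFiber f y}
    (hg : Continuous g) : Continuous ↿fun z => (g z).path := by
  have : Continuous fun q : Z × I => (g q.1).1.2 q.2 := by fun_prop
  exact this

/-- The map into the homotopy fiber given by a map `a` to `X` and a continuous family of paths from
`f ∘ a` to `y`. -/
def lift {Z : Type*} [TopologicalSpace Z] (a : C(Z, X)) (γ : ∀ z, Path (f (a z)) y)
    (hγ : Continuous ↿γ) : C(Z, HomotopyFiber f y) where
  toFun z := ⟨(a z, (γ z).toContinuousMap), (γ z).source, (γ z).target⟩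
  continuous_toFun := (a.continuous.prodMk
    (ContinuousMap.continuous_of_continuous_uncurry (fun z => (γ z).toContinuousMap) hγ)).subtype_mk
      _

/-- The map of homotopy fibers appending a fixed path of base points. -/
noncomputable def shift (f : X → Y) {y y' : Y} (r : Path y y') :
    C(HomotopyFiber f y, HomotopyFiber f y') :=
  lift ⟨fiberIncl f y, continuous_fiberIncl f y⟩ (fun z => z.path.trans r)
    (Path.trans_continuous_family path (continuous_path_comp continuous_id) (fun _ => r)
      (r.continuous.comp continuous_snd))

theorem shift_refl_homotopic_id (f : X → Y) (y : Y) :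
    (shift f (Path.refl y)).Homotopic (ContinuousMap.id _) := by
  let γ (q : I × HomotopyFiber f y) : Path (f (fiberIncl f y q.2)) y :=
    partialTrans q.2.path (Path.refl y) q.1
  have hγ : Continuous ↿γ := continuous_partialTrans_family (δ := fun _ => Path.refl y)
    (continuous_path_comp continuous_snd) ((Path.refl y).continuous.comp continuous_snd)
    continuous_fst
  let H : C(I × HomotopyFiber f y, HomotopyFiber f y) :=
    lift ⟨fun q => fiberIncl f y q.2, (continuous_fiberIncl f y).comp continuous_snd⟩ γ hγ
  refine .symm ⟨⟨H, fun z => ext rfl ?_, fun z => ext rfl ?_⟩⟩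
  · exact coe_partialTrans_zero z.path (Path.refl y)
  · exact coe_partialTrans_one z.path (Path.refl y)

theorem shift_symm_comp_shift_homotopic_id (f : X → Y) {y y' : Y} (r : Path y y') :
    ((shift f r.symm).comp (shift f r)).Homotopic (ContinuousMap.id _) := by
  have hretract : (shift f (Path.refl y)).Homotopic ((shift f r.symm).comp (shift f r)) := by
    let there (q : I × HomotopyFiber f y) : Path (f (fiberIncl f y q.2)) (r q.1) :=
      partialTrans q.2.path r q.1
    let back (q : I × HomotopyFiber f y) : Path y (r q.1) := initialSegment r q.1
    have hr : Continuous ↿fun _ : I × HomotopyFiber f y => r := r.continuous.comp continuous_snd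
    have hthere : Continuous ↿there := continuous_partialTrans_family (δ := fun _ => r)
      (continuous_path_comp continuous_snd) hr continuous_fst
    have hback : Continuous ↿back :=
      continuous_initialSegment_family (γ := fun _ => r) hr continuous_fst
    let H : C(I × HomotopyFiber f y, HomotopyFiber f y) :=
      lift ⟨fun q => fiberIncl f y q.2, (continuous_fiberIncl f y).comp continuous_snd⟩
        (fun q => (there q).trans (back q).symm)
        (Path.trans_continuous_family there hthere (fun q => (back q).symm)
          (Path.symm_continuous_family back hback))
    refine ⟨⟨H, fun z => ext rfl ?_, fun z => ext rfl ?_⟩⟩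
    · exact coe_trans_congr (coe_partialTrans_zero z.path r)
        ((coe_symm_congr (coe_initialSegment_zero r)).trans (congrArg DFunLike.coe Path.refl_symm))
    · exact coe_trans_congr (coe_partialTrans_one z.path r)
        (coe_symm_congr (coe_initialSegment_one r))
  exact hretract.symm.trans (shift_refl_homotopic_id f y)

/-- Homotopy fibers over the two ends of a path are homotopy equivalent. -/
noncomputable def shiftEquiv (f : X → Y) {y y' : Y} (r : Path y y') :
    ContinuousMap.HomotopyEquiv (HomotopyFiber f y) (HomotopyFiber f y') where
  toFun := shift f r
  invFun := shift f r.symm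
  left_inv := shift_symm_comp_shift_homotopic_id f r
  right_inv := by simpa using shift_symm_comp_shift_homotopic_id f r.symm

end HomotopyFiber

namespace PullbackSpace

variable {X Y Y' Z : Type*} [TopologicalSpace X] [TopologicalSpace Y] [TopologicalSpace Y']
  [TopologicalSpace Z] {f : X → Y} {u : Y' → Y}

/-- The path `p` of a point `(y', x, p)` of the homotopy pullback. -/
def path (q : PullbackSpace f u) : Path (u (pbToY' f u q)) (f (pbToX f u q)) :=
  ⟨q.1.2.2, q.2.1, q.2.2⟩

theorem ext {q q' : PullbackSpace f u} (hY' : pbToY' f u q = pbToY' f u q')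
    (hX : pbToX f u q = pbToX f u q') (hpath : ⇑q.path = q'.path) : q = q' :=
  Subtype.ext (Prod.ext hY' (Prod.ext hX (DFunLike.coe_injective hpath)))

theorem continuous_path_comp {g : Z → PullbackSpace f u} (hg : Continuous g) :
    Continuous ↿fun z => (g z).path := by
  have : Continuous fun q : Z × I => (g q.1).1.2.2 q.2 := by fun_prop
  exact this

/-- The map into the homotopy pullback given by maps `b` to `Y'` and `a` to `X` and a continuous
family of paths from `u ∘ b` to `f ∘ a`. -/
def lift (b : C(Z, Y')) (a : C(Z, X)) (γ : ∀ z, Path (u (b z)) (f (a z))) (hγ : Continuous ↿γ) :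
    C(Z, PullbackSpace f u) where
  toFun z := ⟨(b z, a z, (γ z).toContinuousMap), (γ z).source, (γ z).target⟩
  continuous_toFun := (b.continuous.prodMk (a.continuous.prodMk
    (ContinuousMap.continuous_of_continuous_uncurry (fun z => (γ z).toContinuousMap)
      hγ))).subtype_mk _

/-- The point of the homotopy pullback with the given components. -/
def ofPath {y' : Y'} {x : X} (p : Path (u y') (f x)) : PullbackSpace f u :=
  ⟨(y', x, p.toContinuousMap), p.source, p.target⟩

theorem joined_ofPath_of_homotopic {y' : Y'} {x : X} {p p' : Path (u y') (f x)}
    (h : p.Homotopic p') : Joined (ofPath (f := f) (u := u) p) (ofPath p') := by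
  obtain ⟨H⟩ := h
  let Γ : C(I, PullbackSpace f u) :=
    lift (.const I y') (.const I x) H.eval H.continuous
  exact ⟨⟨Γ, ext rfl rfl (congrArg DFunLike.coe H.eval_zero),
    ext rfl rfl (congrArg DFunLike.coe H.eval_one)⟩⟩

theorem exists_joined_ofPath (hf : Continuous f) (hu : Continuous u) (q : PullbackSpace f u)
    {y' : Y'} {x : X} (hy' : Joined (pbToY' f u q) y') (hx : Joined (pbToX f u q) x) :
    ∃ p : Path (u y') (f x), Joined q (ofPath p) := by
  obtain ⟨b⟩ := hy'
  obtain ⟨a⟩ := hx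
  let δ (t : I) : Path (f (a t)) (u (pbToY' f u q)) := (partialTrans q.path (a.map hf) t).symm
  have hδ : Continuous ↿δ := Path.symm_continuous_family (fun t => partialTrans q.path (a.map hf) t)
    (continuous_partialTrans_family (γ := fun _ => q.path) (δ := fun _ => a.map hf)
      (q.path.continuous.comp continuous_snd) ((a.map hf).continuous.comp continuous_snd)
      continuous_id)
  let ε (t : I) : Path (f (a t)) (u (b t)) := partialTrans (δ t) (b.map hu) t
  have hε : Continuous ↿ε := continuous_partialTrans_family (δ := fun _ => b.map hu) hδ
    ((b.map hu).continuous.comp continuous_snd) continuous_id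
  let Γ : C(I, PullbackSpace f u) := lift b.toContinuousMap a.toContinuousMap
    (fun t => (ε t).symm) (Path.symm_continuous_family ε hε)
  refine ⟨((q.path.trans (a.map hf)).symm.trans (b.map hu)).symm,
    ⟨⟨Γ, ext b.source a.source ?_, ext b.target a.target ?_⟩⟩⟩
  · calc ⇑(ε 0).symm
        = (δ 0).symm := coe_symm_congr (coe_partialTrans_zero (δ 0) (b.map hu))
      _ = partialTrans q.path (a.map hf) 0 := congrArg DFunLike.coe (Path.symm_symm _)
      _ = q.path := coe_partialTrans_zero q.path (a.map hf)
  · refine coe_symm_congr ((coe_partialTrans_one (δ 1) (b.map hu)).trans ?_)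
    exact coe_trans_congr (coe_symm_congr (coe_partialTrans_one q.path (a.map hf))) rfl

end PullbackSpace

section BaseChange

variable {X Y Y' : Type*} [TopologicalSpace X] [TopologicalSpace Y] [TopologicalSpace Y']

/-- The comparison map from the fiber of the projection `X' → Y'` at `y'` to the fiber of `f` at
`u y'`, sending `((b, x, p), w)` to `(x, p⁻¹ · (u ∘ w))`. -/
noncomputable def baseChangeMap (f : X → Y) {u : Y' → Y} (hu : Continuous u) (y' : Y') :
    C(HomotopyFiber (pbToY' f u) y', HomotopyFiber f (u y')) :=
  HomotopyFiber.lift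
    ⟨fun z => pbToX f u (fiberIncl _ y' z),
      (continuous_pbToX f u).comp (HomotopyFiber.continuous_fiberIncl _ y')⟩
    (fun z => (fiberIncl (pbToY' f u) y' z).path.symm.trans (z.path.map hu))
    (Path.trans_continuous_family (fun z => (fiberIncl (pbToY' f u) y' z).path.symm)
      (Path.symm_continuous_family (fun z => (fiberIncl (pbToY' f u) y' z).path)
        (PullbackSpace.continuous_path_comp (HomotopyFiber.continuous_fiberIncl _ y')))
      (fun z => z.path.map hu) (hu.comp (HomotopyFiber.continuous_path_comp continuous_id)))

/-- The homotopy inverse of `baseChangeMap`, sending `(x, q)` to `((y', x, q⁻¹), refl)`. -/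
def baseChangeInv (f : X → Y) (u : Y' → Y) (y' : Y') :
    C(HomotopyFiber f (u y'), HomotopyFiber (pbToY' f u) y') :=
  HomotopyFiber.lift
    (PullbackSpace.lift (.const _ y') ⟨fiberIncl f _, HomotopyFiber.continuous_fiberIncl f _⟩
      (fun z => z.path.symm)
      (Path.symm_continuous_family HomotopyFiber.path
        (HomotopyFiber.continuous_path_comp continuous_id)))
    (fun _ => Path.refl y') continuous_const

theorem baseChangeMap_comp_baseChangeInv (f : X → Y) {u : Y' → Y} (hu : Continuous u) (y' : Y') :
    (baseChangeMap f hu y').comp (baseChangeInv f u y') =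
      HomotopyFiber.shift f (Path.refl (u y')) := by
  refine ContinuousMap.ext fun z => HomotopyFiber.ext rfl ?_
  exact coe_trans_congr (congrArg DFunLike.coe (Path.symm_symm z.path)) rfl

-- At time `t` the base point has slid along `w` to `w t`: the part of `w` before time `t` has been
-- moved into the path from `u (w t)` to `f x`, and only the part after it remains.
theorem baseChangeInv_comp_baseChangeMap_homotopic_id (f : X → Y) {u : Y' → Y}
    (hu : Continuous u) (y' : Y') :
    ((baseChangeInv f u y').comp (baseChangeMap f hu y')).Homotopic (ContinuousMap.id _) := by
  let Z := I × HomotopyFiber (pbToY' f u) y'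
  let w (z : Z) : Path (pbToY' f u (fiberIncl _ y' z.2)) y' := z.2.path
  let p (z : Z) : Path (u (pbToY' f u (fiberIncl _ y' z.2))) (f (pbToX f u (fiberIncl _ y' z.2))) :=
    (fiberIncl _ y' z.2).path
  let p' (z : Z) := partialTrans (p z).symm ((w z).map hu) z.1
  have hincl : Continuous fun z : Z => fiberIncl _ y' z.2 :=
    (HomotopyFiber.continuous_fiberIncl _ y').comp continuous_snd
  have hw : Continuous ↿w := HomotopyFiber.continuous_path_comp continuous_snd
  have hp' : Continuous ↿p' :=
    continuous_partialTrans_family (γ := fun z => (p z).symm) (δ := fun z => (w z).map hu)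
      (Path.symm_continuous_family p (PullbackSpace.continuous_path_comp hincl)) (hu.comp hw)
      continuous_fst
  let H : C(Z, HomotopyFiber (pbToY' f u) y') :=
    HomotopyFiber.lift
      (PullbackSpace.lift ⟨fun z => w z z.1, hw.comp (continuous_id.prodMk continuous_fst)⟩
        ⟨fun z => pbToX f u (fiberIncl _ y' z.2), (continuous_pbToX f u).comp hincl⟩
        (fun z => (p' z).symm) (Path.symm_continuous_family p' hp'))
      (fun z => finalSegment (w z) z.1) (continuous_finalSegment_family hw continuous_fst)
  refine .symm ⟨⟨H, fun z => HomotopyFiber.ext (PullbackSpace.ext z.path.source rfl ?_) ?_,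
    fun z => HomotopyFiber.ext (PullbackSpace.ext z.path.target rfl ?_) ?_⟩⟩
  · exact (coe_symm_congr (coe_partialTrans_zero (p (0, z)).symm ((w (0, z)).map hu))).trans
      (congrArg DFunLike.coe (Path.symm_symm (p (0, z))))
  · exact coe_finalSegment_zero z.path
  · exact coe_symm_congr (coe_partialTrans_one (p (1, z)).symm ((w (1, z)).map hu))
  · exact coe_finalSegment_one z.path

/-- The homotopy fibers of `f` and of its base change along `u` agree up to homotopy. -/
noncomputable def baseChangeEquiv (f : X → Y) {u : Y' → Y} (hu : Continuous u) (y' : Y') :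
    ContinuousMap.HomotopyEquiv (HomotopyFiber (pbToY' f u) y') (HomotopyFiber f (u y')) where
  toFun := baseChangeMap f hu y'
  invFun := baseChangeInv f u y'
  left_inv := baseChangeInv_comp_baseChangeMap_homotopic_id f hu y'
  right_inv := by
    rw [baseChangeMap_comp_baseChangeInv]
    exact HomotopyFiber.shift_refl_homotopic_id f (u y')

end BaseChange

section Pushforward

variable {X Y Y' : Type*} [TopologicalSpace X] [TopologicalSpace Y] [TopologicalSpace Y']

theorem pushforward_toPi0 (f : X → Y) (α : ZerothHomotopy X → ℚ) (y : Y) :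
    pushforward f α (toPi0 y) =
      homotopySum (HomotopyFiber f y) (α ∘ pi0Map (HomotopyFiber.continuous_fiberIncl f y)) := by
  have hy : Joined (toPi0 y).out y := toPi0_eq_toPi0.1 (toPi0_out _)
  rw [← homotopySum_comp_homotopyEquiv (HomotopyFiber.shiftEquiv f hy.somePath)]
  refine finsum_congr fun c => congrArg (· * _) ?_
  change _ = α (pi0Map _ (pi0Map _ c))
  nth_rw 2 [← toPi0_out c]
  rfl

theorem pushforward_comp_pi0Map (f : X → Y) {u : Y' → Y} (hu : Continuous u)
    (α : ZerothHomotopy X → ℚ) :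
    pushforward f α ∘ pi0Map hu =
      pushforward (pbToY' f u) (α ∘ pi0Map (continuous_pbToX f u)) := by
  funext c
  obtain ⟨y', rfl⟩ := toPi0_surjective c
  rw [Function.comp_apply, pi0Map_toPi0, pushforward_toPi0, pushforward_toPi0,
    ← homotopySum_comp_homotopyEquiv (baseChangeEquiv f hu y')]
  refine congrArg (homotopySum _) (funext ?_)
  rintro ⟨z⟩
  rfl

end Pushforward

section Properness

variable {X Y Y' : Type*} [TopologicalSpace X] [TopologicalSpace Y] [TopologicalSpace Y']

theorem finite_homotopicQuotient (a b : Y) [Finite (FundamentalGroup Y a)] :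
    Finite (Path.Homotopic.Quotient a b) := by
  rcases isEmpty_or_nonempty (Path.Homotopic.Quotient a b) with _ | ⟨⟨p⟩⟩
  · infer_instance
  · have : Finite (Path.Homotopic.Quotient a a) := ‹Finite (FundamentalGroup Y a)›
    refine Finite.of_injective (fun q => q.trans p.symm) fun q q' h => ?_
    simpa using congrArg (·.trans p) h

theorem IsLocallyFinite.finite_fundamentalGroup (hY : IsLocallyFinite Y) (y : Y) :
    Finite (FundamentalGroup Y y) :=
  have := (hY y).1 1 le_rfl
  .of_equiv _ HomotopyGroup.pi1EquivFundamentalGroup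

variable {f : X → Y} {u : Y' → Y}

theorem finite_pi0Map_pbToY'_pbToX_fiber (hf : Continuous f) (hu : Continuous u)
    (c : ZerothHomotopy Y') (d : ZerothHomotopy X) [Finite (FundamentalGroup Y (u c.out))] :
    {e : ZerothHomotopy (PullbackSpace f u) | pi0Map (continuous_pbToY' f u) e = c ∧
      pi0Map (continuous_pbToX f u) e = d}.Finite := by
  have := finite_homotopicQuotient (u c.out) (f d.out)
  let component :
      Path.Homotopic.Quotient (u c.out) (f d.out) → ZerothHomotopy (PullbackSpace f u) :=
    Quotient.lift (fun p => toPi0 (PullbackSpace.ofPath p)) fun p p' h =>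
      toPi0_eq_toPi0.2 (PullbackSpace.joined_ofPath_of_homotopic h)
  refine (Set.finite_range component).subset ?_
  rintro ⟨q⟩ ⟨hc, hd⟩
  obtain ⟨p, hp⟩ := PullbackSpace.exists_joined_ofPath hf hu q
    (toPi0_eq_toPi0.1 (hc.trans (toPi0_out c).symm))
    (toPi0_eq_toPi0.1 (hd.trans (toPi0_out d).symm))
  exact ⟨Quotient.mk _ p, (toPi0_eq_toPi0.2 hp).symm⟩

theorem pi0Map_pi0Map_pbToY' (hf : Continuous f) (hu : Continuous u)
    (e : ZerothHomotopy (PullbackSpace f u)) :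
    pi0Map hu (pi0Map (continuous_pbToY' f u) e) = pi0Map hf (pi0Map (continuous_pbToX f u) e) := by
  obtain ⟨q⟩ := e
  exact toPi0_eq_toPi0.2 ⟨q.path⟩

theorem finite_pi0Map_pbToX_fiber (hY : ∀ y : Y, Finite (FundamentalGroup Y y))
    (hf : Continuous f) (hu : Continuous u)
    (huprop : ∀ c : ZerothHomotopy Y, {c' : ZerothHomotopy Y' | pi0Map hu c' = c}.Finite)
    (d : ZerothHomotopy X) :
    {e : ZerothHomotopy (PullbackSpace f u) | pi0Map (continuous_pbToX f u) e = d}.Finite := by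
  refine ((huprop (pi0Map hf d)).biUnion fun c _ =>
    have := hY (u c.out)
    finite_pi0Map_pbToY'_pbToX_fiber hf hu c d).subset fun e he => ?_
  refine Set.mem_biUnion (x := pi0Map (continuous_pbToY' f u) e) ?_ ⟨rfl, he⟩
  rw [Set.mem_ofPred_eq, pi0Map_pi0Map_pbToY' hf hu, he]

end Properness

-- Where a homotopy fiber is not locally finite, or `α` is nonzero on infinitely many of its
-- components, the pushforward is a sum of junk values or a junk sum, the same on both sides.
theorem statement3_general {X Y Y' : Type*} [TopologicalSpace X] [TopologicalSpace Y]
    [TopologicalSpace Y'] (hY : ∀ y : Y, Finite (FundamentalGroup Y y))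
    {f : X → Y} (hf : Continuous f) {u : Y' → Y} (hu : Continuous u)
    (huprop : ∀ c : ZerothHomotopy Y, {c' : ZerothHomotopy Y' | pi0Map hu c' = c}.Finite) :
    (∀ d : ZerothHomotopy X,
      {d' : ZerothHomotopy (PullbackSpace f u) |
        pi0Map (continuous_pbToX f u) d' = d}.Finite) ∧
    ∀ α : ZerothHomotopy X → ℚ,
      (pushforward f α) ∘ pi0Map hu =
        pushforward (pbToY' f u) (α ∘ pi0Map (continuous_pbToX f u)) :=
  ⟨finite_pi0Map_pbToX_fiber hY hf hu huprop, pushforward_comp_pi0Map f hu⟩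

theorem statement3 {X Y Y' : Type*} [TopologicalSpace X] [TopologicalSpace Y]
    [TopologicalSpace Y']
    (hX : IsLocallyFinite X) (hY : IsLocallyFinite Y) (hY' : IsLocallyFinite Y')
    {f : X → Y} (hf : Continuous f) {u : Y' → Y} (hu : Continuous u)
    (hX' : IsLocallyFinite (PullbackSpace f u))
    -- `u` is proper: `π₀(u)` has finite fibers
    (huprop : ∀ c : ZerothHomotopy Y, {c' : ZerothHomotopy Y' | pi0Map hu c' = c}.Finite) :
    -- `u'` is proper
    (∀ d : ZerothHomotopy X,
      {d' : ZerothHomotopy (PullbackSpace f u) |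
        pi0Map (continuous_pbToX f u) d' = d}.Finite) ∧
    -- base change formula `u^*(f_!(α)) = f'_!((u')^*(α))`
    ∀ α : ZerothHomotopy X → ℚ, (Function.support α).Finite →
      (pushforward f α) ∘ pi0Map hu =
        pushforward (pbToY' f u) (α ∘ pi0Map (continuous_pbToX f u)) := by
  obtain ⟨hproper, hbase⟩ := statement3_general (fun y => hY.finite_fundamentalGroup y) hf hu huprop
  exact ⟨hproper, fun α _ => hbase α⟩
end

section
/- Let 𝒜 be an abelian category in which Ext groups are defined and such that Ext²(a,b) = 0 for all objects a, b of 𝒜 (𝒜 is hereditary). Then every bounded cochain complex K over 𝒜 (say with K^n = 0 for n outside an interval [a,b]) is isomorphic in the derived category D(𝒜) to the finite direct sum ⊕_{n=a}^{b} single(H^n(K))[−n], where H^n(K) is the n-th cohomology object of K. -/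
open CategoryTheory CategoryTheory.Limits

universe w v u

/-!
For each `n`, `H^n(K)` is already the `n`-th cohomology of the two-term complex
`K^{n-1} ⟶ Z^n(K)`, which maps to `K`. The truncation triangle of this complex has a
connecting morphism from `H^n(K)[-n]` to `A[-(n-1)][1]`, where `A` is its other cohomology
object; this is a class in `Ext²(H^n(K), A) = 0`, so the triangle splits. A splitting gives a
morphism `H^n(K)[-n] ⟶ K` inducing an isomorphism on `H^n`, and the sum of these morphisms over
all `n` is an isomorphism because it is one on each cohomology object.
-/

section Biproducts

variable {C J : Type*} [Category* C] [HasZeroMorphisms C] {F : J → C} [HasBiproduct F]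

lemma isZero_biproduct (hF : ∀ j, IsZero (F j)) : IsZero (⨁ F) := by
  rw [IsZero.iff_id_eq_zero]
  exact biproduct.hom_ext' _ _ fun j => (hF j).eq_of_src _ _

lemma isIso_biproduct_desc_of_isZero {X : C} (f : ∀ j, F j ⟶ X) (j : J) [IsIso (f j)]
    (hF : ∀ i, i ≠ j → IsZero (F i)) : IsIso (biproduct.desc f) := by
  refine ⟨inv (f j) ≫ biproduct.ι F j, biproduct.hom_ext' _ _ fun i => ?_, by simp⟩
  by_cases hij : i = j
  · subst hij
    simp
  · exact (hF i hij).eq_of_src _ _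

lemma isIso_map_biproduct_desc {D : Type*} [Category* D] [HasZeroMorphisms D] (H : C ⥤ D)
    [H.PreservesZeroMorphisms] [PreservesBiproduct F H] {X : C} (f : ∀ j, F j ⟶ X)
    (hf : IsIso (biproduct.desc fun j => H.map (f j))) : IsIso (H.map (biproduct.desc f)) := by
  rw [← biproduct.mapBiproduct_hom_desc]
  exact IsIso.comp_isIso' inferInstance hf

end Biproducts

section TwoTermTruncation

lemma quasiIsoAt_of_epi_of_isIso_of_mono {C ι : Type*} [Category* C] [HasZeroMorphisms C]
    {c : ComplexShape ι} {K L : HomologicalComplex C c} (φ : K ⟶ L) {i j k : ι}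
    [K.HasHomology j] [L.HasHomology j] (hij : c.prev j = i) (hjk : c.next j = k)
    [Epi (φ.f i)] [IsIso (φ.f j)] [Mono (φ.f k)] : QuasiIsoAt φ j := by
  subst hij hjk
  rw [quasiIsoAt_iff]
  let ψ := (HomologicalComplex.shortComplexFunctor C c j).map φ
  have : Epi ψ.τ₁ := inferInstanceAs (Epi (φ.f (c.prev j)))
  have : IsIso ψ.τ₂ := inferInstanceAs (IsIso (φ.f j))
  have : Mono ψ.τ₃ := inferInstanceAs (Mono (φ.f (c.next j)))
  exact ShortComplex.quasiIso_of_epi_of_isIso_of_mono ψ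

variable {C : Type*} [Category* C] [Abelian C] (K : CochainComplex C ℤ) (n : ℤ)

/-- The complex `K^{n-1} ⟶ Z^n(K)` in degrees `n - 1` and `n`, which has the same `n`-th cohomology
as `K`. It is built from the canonical truncation `K.truncLE n`, whose terms in these degrees are
`K^{n-1}` and `Z^n(K)`. -/
noncomputable def twoTermTrunc : CochainComplex C ℤ :=
  HomologicalComplex.double ((K.truncLE n).d (n - 1) n)
    (show (ComplexShape.up ℤ).Rel (n - 1) n by simp)

lemma isZero_twoTermTrunc_X (i : ℤ) (h₀ : i ≠ n - 1) (h₁ : i ≠ n) :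
    IsZero ((twoTermTrunc K n).X i) :=
  HomologicalComplex.isZero_double_X _ _ _ h₀ h₁

instance : (twoTermTrunc K n).IsStrictlyGE (n - 1) := by
  rw [CochainComplex.isStrictlyGE_iff]
  exact fun i hi => isZero_twoTermTrunc_X K n i (by lia) (by lia)

instance : (twoTermTrunc K n).IsStrictlyLE n := by
  rw [CochainComplex.isStrictlyLE_iff]
  exact fun i hi => isZero_twoTermTrunc_X K n i (by lia) (by lia)

/-- The inclusion of `K^{n-1} ⟶ Z^n(K)` as the top two terms of the canonical truncation of `K` in
degrees at most `n`. -/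
noncomputable def twoTermTruncToTruncLE : twoTermTrunc K n ⟶ K.truncLE n :=
  HomologicalComplex.mkHomFromDouble _ (by lia) (𝟙 _) (𝟙 _) (by simp) (by
    rintro k (rfl : n + 1 = k)
    exact ((K.truncLE n).isZero_of_isStrictlyLE n (n + 1) (by lia)).eq_of_tgt _ _)

instance : QuasiIsoAt (twoTermTruncToTruncLE K n) n := by
  have : Epi ((twoTermTruncToTruncLE K n).f (n - 1)) := by
    simp only [twoTermTrunc, twoTermTruncToTruncLE, HomologicalComplex.mkHomFromDouble_f₀]
    infer_instance
  have : IsIso ((twoTermTruncToTruncLE K n).f n) := by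
    simp only [twoTermTrunc, twoTermTruncToTruncLE, HomologicalComplex.mkHomFromDouble_f₁]
    infer_instance
  have : Mono ((twoTermTruncToTruncLE K n).f (n + 1)) :=
    ⟨fun _ _ _ => (isZero_twoTermTrunc_X K n (n + 1) (by lia) (by lia)).eq_of_tgt _ _⟩
  exact quasiIsoAt_of_epi_of_isIso_of_mono _ (CochainComplex.prev ℤ n) (CochainComplex.next ℤ n)

/-- The inclusion of `K^{n-1} ⟶ Z^n(K)` in `K`. -/
noncomputable def twoTermTruncι : twoTermTrunc K n ⟶ K :=
  twoTermTruncToTruncLE K n ≫ K.ιTruncLE n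

instance : QuasiIsoAt (twoTermTruncι K n) n := by
  have := K.quasiIsoAt_ιTruncLE n n le_rfl
  exact quasiIsoAt_comp _ _ _

end TwoTermTruncation

section DerivedCategory

open DerivedCategory TStructure

variable {C : Type u} [Category.{v} C] [Abelian C] [HasDerivedCategory.{w} C]

/-- Morphisms between shifted single objects of the derived category depend only on the total
degree: both sides are `Ext^q(a, b)`. -/
noncomputable def singleFunctorHomEquiv (a b : C) {n m p q : ℤ} (h : n + p = m + q) :
    ((singleFunctor C n).obj a ⟶ ((singleFunctor C m).obj b)⟦p⟧) ≃
      ((singleFunctor C 0).obj a ⟶ ((singleFunctor C 0).obj b)⟦q⟧) :=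
  (Functor.FullyFaithful.ofFullyFaithful (shiftFunctor _ n)).homEquiv.trans <|
    Iso.homCongr (((singleFunctors C).shiftIso n 0 n (by lia)).app a) <|
      (shiftFunctor _ n).mapIso (((singleFunctors C).shiftIso p (m - p) m (by lia)).app b) ≪≫
        ((singleFunctors C).shiftIso n (-q) (m - p) (by lia)).app b ≪≫
          (((singleFunctors C).shiftIso q (-q) 0 (by lia)).app b).symm

/-- The condition `Ext²(a, b) = 0` for all `b`, with `Ext²` computed in the derived category. -/
def SecondExtVanishes (a : C) : Prop :=
  ∀ b : C, Subsingleton ((singleFunctor C 0).obj a ⟶ ((singleFunctor C 0).obj b)⟦(2 : ℤ)⟧)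

lemma SecondExtVanishes.of_iso {a a' : C} (h : SecondExtVanishes.{w} a) (e : a ≅ a') :
    SecondExtVanishes.{w} a' := fun b =>
  have := h b
  (((singleFunctor C 0).mapIso e).homCongr (Iso.refl _)).symm.subsingleton

lemma nonempty_iso_singleFunctor_homology (X : DerivedCategory C) (n : ℤ) [X.IsGE n] [X.IsLE n] :
    Nonempty (X ≅ (singleFunctor C n).obj ((homologyFunctor C n).obj X)) := by
  obtain ⟨a, ⟨e⟩⟩ := exists_iso_singleFunctor_obj_of_isGE_of_isLE X n
  exact ⟨e ≪≫ (singleFunctor C n).mapIso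
    (((singleFunctorCompHomologyFunctorIso C n).app a).symm ≪≫
      (homologyFunctor C n).mapIso e.symm)⟩

lemma isIso_homologyMap_truncGEπ (X : DerivedCategory C) {n i : ℤ} (hi : n ≤ i) :
    IsIso ((homologyFunctor C i).map ((t.truncGEπ n).app X)) := by
  have hT := t.triangleLEGE_distinguished (n - 1) n (by lia) X
  have hzero (j : ℤ) (hj : n ≤ j) :
      IsZero ((homologyFunctor C j).obj ((t.truncLE (n - 1)).obj X)) :=
    isZero_of_isLE _ (n - 1) j (by lia)
  have : Mono ((homologyFunctor C i).map ((t.truncGEπ n).app X)) :=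
    (HomologySequence.mono_homologyMap_mor₂_iff _ hT i).2 ((hzero i hi).eq_of_src _ _)
  have : Epi ((homologyFunctor C i).map ((t.truncGEπ n).app X)) :=
    (HomologySequence.epi_homologyMap_mor₂_iff _ hT i (i + 1)).2
      ((hzero (i + 1) (by lia)).eq_of_tgt _ _)
  exact isIso_of_mono_of_epi _


lemma SecondExtVanishes.subsingleton_hom_shift {X Y : DerivedCategory C} {n m p : ℤ}
    (h : n + p = m + 2) [X.IsGE n] [X.IsLE n] [Y.IsGE m] [Y.IsLE m]
    (hX : SecondExtVanishes.{w} ((homologyFunctor C n).obj X)) : Subsingleton (X ⟶ Y⟦p⟧) := by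
  obtain ⟨eX⟩ := nonempty_iso_singleFunctor_homology X n
  obtain ⟨eY⟩ := nonempty_iso_singleFunctor_homology Y m
  have := hX ((homologyFunctor C m).obj Y)
  exact ((eX.homCongr ((shiftFunctor _ p).mapIso eY)).trans
    (singleFunctorHomEquiv _ _ h)).subsingleton

lemma SecondExtVanishes.isSplitEpi_truncGEπ {X : DerivedCategory C} {n : ℤ}
    [X.IsGE (n - 1)] [X.IsLE n] (hX : SecondExtVanishes.{w} ((homologyFunctor C n).obj X)) :
    IsSplitEpi ((t.truncGEπ n).app X) := by
  have hT := t.triangleLEGE_distinguished (n - 1) n (by lia) X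
  have := isIso_homologyMap_truncGEπ X (le_refl n)
  have hB : SecondExtVanishes.{w} ((homologyFunctor C n).obj ((t.truncGE n).obj X)) :=
    hX.of_iso (asIso ((homologyFunctor C n).map ((t.truncGEπ n).app X)))
  have : Subsingleton ((t.truncGE n).obj X ⟶ ((t.truncLE (n - 1)).obj X)⟦(1 : ℤ)⟧) :=
    hB.subsingleton_hom_shift (m := n - 1) (by lia)
  have : Epi ((t.truncGEπ n).app X) :=
    (Pretriangulated.Triangle.mor₃_eq_zero_iff_epi₂ _ hT).1 (this.elim _ _)
  exact isSplitEpi_of_epi _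

lemma SecondExtVanishes.exists_isIso_homologyMap {X : DerivedCategory C} {n : ℤ}
    [X.IsGE (n - 1)] [X.IsLE n] (hX : SecondExtVanishes.{w} ((homologyFunctor C n).obj X)) :
    ∃ s : (singleFunctor C n).obj ((homologyFunctor C n).obj X) ⟶ X,
      IsIso ((homologyFunctor C n).map s) := by
  let π := (t.truncGEπ n).app X
  have : IsSplitEpi π := hX.isSplitEpi_truncGEπ
  have : IsIso ((homologyFunctor C n).map π) := isIso_homologyMap_truncGEπ X le_rfl
  have : IsIso ((homologyFunctor C n).map (section_ π)) :=
    IsIso.of_isIso_fac_right ((Functor.map_comp _ _ _).symm.trans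
      (congrArg (homologyFunctor C n).map (IsSplitEpi.id π)))
  obtain ⟨e⟩ := nonempty_iso_singleFunctor_homology ((t.truncGE n).obj X) n
  refine ⟨(singleFunctor C n).map ((homologyFunctor C n).map π) ≫ e.inv ≫ section_ π, ?_⟩
  simp only [Functor.map_comp]
  infer_instance

lemma SecondExtVanishes.exists_isIso_homologyMap_Q {K : CochainComplex C ℤ} {n : ℤ}
    (hK : SecondExtVanishes.{w} (K.homology n)) :
    ∃ s : (singleFunctor C n).obj (K.homology n) ⟶ Q.obj K,
      IsIso ((homologyFunctor C n).map s) := by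
  let φ := Q.map (twoTermTruncι K n)
  have : IsIso ((homologyFunctor C n).map φ) :=
    (NatIso.isIso_map_iff (homologyFunctorFactors C n) _).2
      (inferInstanceAs (IsIso (HomologicalComplex.homologyMap (twoTermTruncι K n) n)))
  let e : K.homology n ≅ (homologyFunctor C n).obj (Q.obj (twoTermTrunc K n)) :=
    ((homologyFunctorFactors C n).app K).symm ≪≫ (asIso ((homologyFunctor C n).map φ)).symm
  obtain ⟨s, hs⟩ := (hK.of_iso e).exists_isIso_homologyMap
  refine ⟨(singleFunctor C n).map e.hom ≫ s ≫ φ, ?_⟩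
  simp only [Functor.map_comp]
  infer_instance

lemma isIso_biproduct_desc_of_isIso_homologyMap {X : DerivedCategory C} {S : Finset ℤ}
    {F : S → DerivedCategory C} [∀ n : S, (F n).IsGE n] [∀ n : S, (F n).IsLE n] (f : ∀ n, F n ⟶ X)
    (hf : ∀ n : S, IsIso ((homologyFunctor C n).map (f n)))
    (hX : ∀ m ∉ S, IsZero ((homologyFunctor C m).obj X)) :
    IsIso (biproduct.desc f) := by
  rw [DerivedCategory.isIso_iff]
  intro m
  have hF (n : S) (hnm : (n : ℤ) ≠ m) : IsZero ((homologyFunctor C m).obj (F n)) := by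
    rcases hnm.lt_or_gt with h | h
    · exact isZero_of_isLE _ n m h
    · exact isZero_of_isGE _ n m h
  refine isIso_map_biproduct_desc _ f ?_
  by_cases hm : m ∈ S
  · have := hf ⟨m, hm⟩
    exact isIso_biproduct_desc_of_isZero _ ⟨m, hm⟩ fun n hn => hF n fun h => hn (Subtype.ext h)
  · exact (isZero_biproduct fun n => hF n fun h => hm (h ▸ n.2)).isIso (hX m hm) _

theorem statement12_general (K : CochainComplex C ℤ) (S : Finset ℤ)
    (hK : ∀ n ∉ S, K.ExactAt n) (hExt : ∀ n ∈ S, SecondExtVanishes.{w} (K.homology n)) :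
    Nonempty (Q.obj K ≅ ⨁ fun n : S => ((singleFunctor C 0).obj (K.homology n))⟦(-(n : ℤ))⟧) := by
  choose s hs using fun n : S => (hExt n n.2).exists_isIso_homologyMap_Q
  have hQK (m : ℤ) (hm : m ∉ S) : IsZero ((homologyFunctor C m).obj (Q.obj K)) :=
    (hK m hm).isZero_homology.of_iso ((homologyFunctorFactors C m).app K)
  have : IsIso (biproduct.desc s) := isIso_biproduct_desc_of_isIso_homologyMap s hs hQK
  exact ⟨(asIso (biproduct.desc s)).symm ≪≫ biproduct.mapIso fun n : S =>
    (((singleFunctors C).shiftIso (-(n : ℤ)) n 0 (by lia)).app (K.homology n)).symm⟩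

end DerivedCategory

/-- If `𝒜` is an abelian category which is hereditary, i.e. `Ext²(a, b) = 0` for all
objects `a`, `b` (using the identification
`Ext²(a,b) ≅ Hom_{D(𝒜)}(single a, (single b)⟦2⟧)`), then any cochain complex `K` which is
bounded, say supported in an interval `[a, b]`, is isomorphic in the derived category to
the finite direct sum `⊕_{n = a}^{b} (single (H^n(K)))⟦-n⟧`. -/
theorem statement12 {C : Type u} [Category.{v} C] [Abelian C] [HasDerivedCategory.{w} C]
    (hhered : ∀ a b : C, Subsingleton
      ((DerivedCategory.singleFunctor C 0).obj a ⟶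
        (((DerivedCategory.singleFunctor C 0).obj b)⟦(2 : ℤ)⟧)))
    (K : CochainComplex C ℤ) (a b : ℤ)
    (hK : ∀ n : ℤ, n < a ∨ b < n → IsZero (K.X n)) :
    Nonempty (DerivedCategory.Q.obj K ≅
      ⨁ fun n : Finset.Icc a b =>
        (((DerivedCategory.singleFunctor C 0).obj (K.homology (n : ℤ)))⟦(-(n : ℤ))⟧)) := by
  refine statement12_general K (Finset.Icc a b) (fun n hn => ?_) fun n _ => hhered (K.homology n)
  exact ShortComplex.exact_of_isZero_X₂ _ (hK n (by rw [Finset.mem_Icc] at hn; lia))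
end
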